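/- There is a uniform constant C such that for every w ∈ C₀^∞(ℝ³) and every x ∈ ℝ³ with |x| ≥ 2: |w(x)| ≤ C Σ_{|α|+j≤2} ( ∫_{{y ∈ ℝ³ : | |y| − |x| | ≤ 1}} |Ω^α ∂_r^j w(y)|² |y|^{−2} dy )^{1/2}, where ∂_r = (y/|y|)·∇ is the radial derivative and Ω^α denotes a composition of |α| of the rotation vector fields. -/

import Mathlib

open MeasureTheory Real Finset

noncomputable section

/-- Points of space `ℝ³`. -/
abbrev Sp : Type := Fin 3 → ℝ

/-- Spatial partial derivative `∂_j`. -/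
def pd3 (j : Fin 3) (w : Sp → ℝ) : Sp → ℝ := fun x => fderiv ℝ w x (Pi.single j 1)

/-- The three Euclidean rotation fields `Ω_{ij} = x_i∂_j - x_j∂_i`, `1 ≤ i < j ≤ 3`. -/
def Rot3 : Fin 3 → (Sp → ℝ) → Sp → ℝ :=
  ![fun w x => x 0 * pd3 1 w x - x 1 * pd3 0 w x,
    fun w x => x 0 * pd3 2 w x - x 2 * pd3 0 w x,
    fun w x => x 1 * pd3 2 w x - x 2 * pd3 1 w x]

/-- `Ω^α`: a composition of `m` rotation fields. -/
def Rot3Comp : ∀ {m : ℕ}, (Fin m → Fin 3) → (Sp → ℝ) → Sp → ℝ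
  | 0, _, w => w
  | _ + 1, α, w => Rot3 (α 0) (Rot3Comp (fun i => α i.succ) w)

/-- `∂_x^β`: a composition of `m` spatial derivatives. -/
def Pd3Comp : ∀ {m : ℕ}, (Fin m → Fin 3) → (Sp → ℝ) → Sp → ℝ
  | 0, _, w => w
  | _ + 1, β, w => pd3 (β 0) (Pd3Comp (fun i => β i.succ) w)

/-- Euclidean length `r = |x|` of a spatial point. -/
def rad (x : Sp) : ℝ := Real.sqrt (∑ i, (x i) ^ 2)

/-- Japanese bracket `⟨z⟩ = (1+z²)^{1/2}`. -/
def jb (z : ℝ) : ℝ := Real.sqrt (1 + z ^ 2)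

/-- The radial derivative `∂_r = (y/|y|)·∇`. -/
def radDeriv (w : Sp → ℝ) : Sp → ℝ := fun y => ∑ i, (y i / rad y) * pd3 i w y

/-- `∂_r^j`: the `j`-fold radial derivative. -/
def radDerivIter : ℕ → (Sp → ℝ) → Sp → ℝ
  | 0, w => w
  | j + 1, w => radDeriv (radDerivIter j w)

theorem rad_sq (z : Sp) : rad z ^ 2 = ∑ i, (z i) ^ 2 := by
  unfold rad; rw [Real.sq_sqrt]; positivity

theorem rad_nonneg (z : Sp) : 0 ≤ rad z := Real.sqrt_nonneg _

theorem rad_pos {z : Sp} (hz : z ≠ 0) : 0 < rad z := by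
  unfold rad
  apply Real.sqrt_pos.2
  obtain ⟨i, hi⟩ := Function.ne_iff.1 hz
  exact Finset.sum_pos' (fun _ _ => sq_nonneg _) ⟨i, Finset.mem_univ _, by simpa using pow_pos (abs_pos.2 hi) 2⟩

theorem ne_zero_of_rad_pos {z : Sp} (hz : 0 < rad z) : z ≠ 0 := by
  rintro rfl
  simp [rad] at hz

theorem rad_smul (t : ℝ) (z : Sp) : rad (t • z) = |t| * rad z := by
  unfold rad
  rw [← Real.sqrt_sq_eq_abs, ← Real.sqrt_mul (sq_nonneg _), Finset.mul_sum]
  simp [mul_pow]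

theorem continuous_rad : Continuous rad := by
  unfold rad; fun_prop

def dotp (z v : Sp) : ℝ := ∑ i, z i * v i

theorem contDiffAt_rad {z : Sp} (hz : z ≠ 0) : ContDiffAt ℝ (⊤ : ℕ∞) rad z := by
  unfold rad
  apply ContDiffAt.sqrt
  · fun_prop
  · rw [← rad_sq]; exact (pow_pos (rad_pos hz) 2).ne'

def radD (z : Sp) : Sp →L[ℝ] ℝ :=
  (1 / rad z) • ∑ i, z i • (ContinuousLinearMap.proj i : Sp →L[ℝ] ℝ)

theorem radD_apply (z v : Sp) : radD z v = dotp z v / rad z := by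
  simp [radD, dotp]; ring

theorem hasFDerivAt_rad {z : Sp} (hz : z ≠ 0) : HasFDerivAt rad (radD z) z := by
  have h : HasFDerivAt (fun z : Sp => ∑ i, (z i) ^ 2)
      (∑ i, (2 * z i) • (ContinuousLinearMap.proj i : Sp →L[ℝ] ℝ)) z := by
    apply HasFDerivAt.fun_sum
    intro i _
    have := (hasFDerivAt_apply (𝕜 := ℝ) i z).pow 2
    simpa using this
  have h2 := h.sqrt (by rw [← rad_sq]; exact (pow_pos (rad_pos hz) 2).ne')
  refine h2.congr_fderiv ?_
  ext v
  have : √(∑ i, z i ^ 2) = rad z := rfl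
  have hp := (rad_pos hz).ne'
  rw [this, radD_apply]
  simp [dotp, Fin.sum_univ_three]
  field_simp

/-- the radial shift map -/
def Psi (c : ℝ) (z : Sp) : Sp := (1 + c / rad z) • z

theorem rad_Psi {c : ℝ} (hc : 0 ≤ c) {z : Sp} (hz : z ≠ 0) : rad (Psi c z) = rad z + c := by
  have hp := rad_pos hz
  rw [Psi, rad_smul, abs_of_nonneg (by positivity)]
  field_simp

def PsiD (c : ℝ) (z : Sp) : Sp →L[ℝ] Sp :=
  (1 + c / rad z) • ContinuousLinearMap.id ℝ Sp + (-(c / rad z ^ 2) • radD z).smulRight z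

theorem hasFDerivAt_Psi (c : ℝ) {z : Sp} (hz : z ≠ 0) : HasFDerivAt (Psi c) (PsiD c z) z := by
  have hp := (rad_pos hz).ne'
  have h1 : HasFDerivAt (fun z => 1 + c / rad z) (-(c / rad z ^ 2) • radD z) z := by
    have := ((hasDerivAt_inv hp).comp_hasFDerivAt z (hasFDerivAt_rad hz)).const_mul c
    have := this.const_add 1
    refine (this.congr_fderiv ?_).congr_of_eventuallyEq ?_
    · ext v; simp; ring
    · exact Filter.Eventually.of_forall fun y => by simp [div_eq_mul_inv]
  exact h1.smul (hasFDerivAt_id z)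

theorem det_PsiD (c s : ℝ) {z : Sp} (hz : z ≠ 0) :
    (s • PsiD c z).det = s ^ 3 * (1 + c / rad z) ^ 2 := by
  have hp := (rad_pos hz).ne'
  have hs := rad_sq z
  rw [Fin.sum_univ_three] at hs
  have h : ∀ i j, LinearMap.toMatrix' ((s • PsiD c z : Sp →L[ℝ] Sp) : Sp →ₗ[ℝ] Sp) i j =
      s * ((1 + c / rad z) * (if i = j then 1 else 0) - c / rad z ^ 3 * z j * z i) := by
    intro i j
    rw [LinearMap.toMatrix'_apply]
    have : dotp z (Pi.single j 1) = z j := by simp [dotp, Pi.single_apply]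
    have e : (Pi.single j (1:ℝ) : Sp) i = if i = j then 1 else 0 := by simp [Pi.single_apply]
    simp [PsiD, radD_apply, this, e]
    field_simp
    split_ifs <;> ring
  rw [ContinuousLinearMap.det, ← LinearMap.det_toMatrix', Matrix.det_fin_three]
  simp only [h]
  simp
  set N := rad z
  have h0 : z 0 ^ 2 = N ^ 2 - z 1 ^ 2 - z 2 ^ 2 := by linarith
  have key : c / N ^ 3 * (z 0 ^ 2 + z 1 ^ 2 + z 2 ^ 2) = c / N := by
    rw [← hs]; field_simp
  linear_combination (-s^3 * (1 + c/N)^2) * key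

theorem fderiv_eq_pd3 (g : Sp → ℝ) (y u : Sp) : fderiv ℝ g y u = ∑ i, u i * pd3 i g y := by
  conv_lhs => rw [pi_eq_sum_univ' u]
  simp [pd3, map_sum]

def crossp (z v : Sp) : Fin 3 → ℝ :=
  ![z 0 * v 1 - z 1 * v 0, z 0 * v 2 - z 2 * v 0, z 1 * v 2 - z 2 * v 1]

theorem fderiv_PsiD {c : ℝ} (hc : 0 ≤ c) {z : Sp} (hz : z ≠ 0) (g : Sp → ℝ) (v : Sp) :
    fderiv ℝ g (Psi c z) (PsiD c z v) = dotp z v / rad z * radDeriv g (Psi c z)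
      + ∑ k, crossp z v k / rad z ^ 2 * Rot3 k g (Psi c z) := by
  have hp := rad_pos hz
  have hs := rad_sq z
  rw [Fin.sum_univ_three] at hs
  have hpc : rad z + c ≠ 0 := by positivity
  rw [fderiv_eq_pd3, radDeriv, rad_Psi hc hz]
  simp only [Fin.sum_univ_three, Rot3, crossp]
  simp [PsiD, radD_apply, dotp, Fin.sum_univ_three]
  simp only [show ∀ i, Psi c z i = (1 + c / rad z) * z i from fun i => by simp [Psi]]
  generalize pd3 0 g (Psi c z) = p0
  generalize pd3 1 g (Psi c z) = p1
  generalize pd3 2 g (Psi c z) = p2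
  generalize rad z = N at *
  generalize z 0 = a at *
  generalize z 1 = b at *
  generalize z 2 = d at *
  have e : ∀ q, (1 + c / N) * q / (N + c) = q / N := by intro q; field_simp
  simp only [e]
  have h1 : ∀ q, N⁻¹ * q = q / N := by intro q; field_simp
  field_simp
  have h3 : N ^ 3 = N * (a^2+b^2+d^2) := by rw [← hs]; ring
  have h4 : N ^ 4 = N^2 * (a^2+b^2+d^2) := by rw [← hs]; ring
  ring_nf
  simp only [h3, hs]
  ring

/-- smooth away from the origin -/
def Sm (g : Sp → ℝ) : Prop := ∀ y, y ≠ 0 → ContDiffAt ℝ (⊤ : ℕ∞) g y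

theorem Sm.pd3 {g : Sp → ℝ} (h : Sm g) (j : Fin 3) : Sm (pd3 j g) := by
  intro y hy
  have := (h y hy).fderiv_right (m := (⊤ : ℕ∞)) (by simp)
  exact this.clm_apply contDiffAt_const

theorem Sm.coord (i : Fin 3) : Sm (fun y => y i) := fun y _ => by fun_prop

theorem Sm.mul {f g : Sp → ℝ} (hf : Sm f) (hg : Sm g) : Sm (fun y => f y * g y) :=
  fun y hy => (hf y hy).mul (hg y hy)

theorem Sm.sub {f g : Sp → ℝ} (hf : Sm f) (hg : Sm g) : Sm (fun y => f y - g y) :=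
  fun y hy => (hf y hy).sub (hg y hy)

theorem Sm.unit (i : Fin 3) : Sm (fun y => y i / rad y) :=
  fun y hy => (Sm.coord i y hy).div (contDiffAt_rad hy) (rad_pos hy).ne'

theorem Sm.radDeriv {g : Sp → ℝ} (h : Sm g) : Sm (radDeriv g) := by
  intro y hy
  unfold _root_.radDeriv
  exact ContDiffAt.sum fun i _ => ((Sm.unit i).mul (h.pd3 i)) y hy

theorem Sm.rot {g : Sp → ℝ} (h : Sm g) (k : Fin 3) : Sm (Rot3 k g) := by
  fin_cases k
  · exact ((Sm.coord 0).mul (h.pd3 1)).sub ((Sm.coord 1).mul (h.pd3 0))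
  · exact ((Sm.coord 0).mul (h.pd3 2)).sub ((Sm.coord 2).mul (h.pd3 0))
  · exact ((Sm.coord 1).mul (h.pd3 2)).sub ((Sm.coord 2).mul (h.pd3 1))

theorem Sm.diff {g : Sp → ℝ} (h : Sm g) {y : Sp} (hy : y ≠ 0) : DifferentiableAt ℝ g y :=
  (h y hy).differentiableAt (by simp)

theorem pd3_mul {f g : Sp → ℝ} (hf : Sm f) (hg : Sm g) (j : Fin 3) {y : Sp} (hy : y ≠ 0) :
    pd3 j (fun y => f y * g y) y = pd3 j f y * g y + f y * pd3 j g y := by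
  unfold pd3
  rw [fderiv_fun_mul (hf.diff hy) (hg.diff hy)]
  simp; ring

theorem pd3_sub {f g : Sp → ℝ} (hf : Sm f) (hg : Sm g) (j : Fin 3) {y : Sp} (hy : y ≠ 0) :
    pd3 j (fun y => f y - g y) y = pd3 j f y - pd3 j g y := by
  unfold pd3
  rw [fderiv_fun_sub (hf.diff hy) (hg.diff hy)]
  simp

theorem pd3_add {f g : Sp → ℝ} (hf : Sm f) (hg : Sm g) (j : Fin 3) {y : Sp} (hy : y ≠ 0) :
    pd3 j (fun y => f y + g y) y = pd3 j f y + pd3 j g y := by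
  unfold pd3
  rw [fderiv_fun_add (hf.diff hy) (hg.diff hy)]
  simp

theorem pd3_coord (i j : Fin 3) (y : Sp) : pd3 j (fun y => y i) y = if i = j then 1 else 0 := by
  unfold pd3
  rw [(hasFDerivAt_apply (𝕜 := ℝ) i y).fderiv]
  simp [Pi.single_apply]

theorem pd3_unit (i j : Fin 3) {y : Sp} (hy : y ≠ 0) :
    pd3 j (fun y => y i / rad y) y = (if i = j then 1 else 0) / rad y - y i * y j / rad y ^ 3 := by
  have hp := (rad_pos hy).ne'
  have hd : dotp y (Pi.single j 1) = y j := by simp [dotp, Pi.single_apply]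
  have h1 : HasFDerivAt (fun z => (rad z)⁻¹) (-(1 / rad y ^ 2) • radD y) y := by
    refine ((hasDerivAt_inv hp).comp_hasFDerivAt y (hasFDerivAt_rad hy)).congr_fderiv ?_
    ext v; simp
  have h2 := (hasFDerivAt_apply (𝕜 := ℝ) i y).mul h1
  have : pd3 j (fun y => y i / rad y) y = fderiv ℝ ((fun y : Sp => y i) * fun y => (rad y)⁻¹) y (Pi.single j 1) := by
    unfold pd3; congr 1
  rw [this, h2.fderiv]
  simp [radD_apply, hd, Pi.single_apply]
  split_ifs <;> field_simp <;> ring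

theorem pd3_comm {g : Sp → ℝ} (h : Sm g) (i j : Fin 3) {y : Sp} (hy : y ≠ 0) :
    pd3 i (pd3 j g) y = pd3 j (pd3 i g) y := by
  have hs := (h y hy).isSymmSndFDerivAt (by simp; exact WithTop.coe_le_coe.2 (le_top : (2:ℕ∞) ≤ ⊤))
  have hd : DifferentiableAt ℝ (fderiv ℝ g) y :=
    ((h y hy).fderiv_right (m := (⊤ : ℕ∞)) (by simp)).differentiableAt (by simp)
  have key : ∀ i j, pd3 i (pd3 j g) y = fderiv ℝ (fderiv ℝ g) y (Pi.single i 1) (Pi.single j 1) := by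
    intro i j
    have := hd.hasFDerivAt.clm_apply (hasFDerivAt_const (Pi.single j (1:ℝ)) y)
    have h2 : pd3 i (pd3 j g) y = fderiv ℝ (fun x => fderiv ℝ g x (Pi.single j 1)) y (Pi.single i 1) := rfl
    rw [h2, this.fderiv]
    simp
  rw [key, key]
  exact hs _ _

theorem pd3_radDeriv {g : Sp → ℝ} (h : Sm g) (j : Fin 3) {y : Sp} (hy : y ≠ 0) :
    pd3 j (radDeriv g) y = ∑ i, (((if i = j then 1 else 0) / rad y - y i * y j / rad y ^ 3) * pd3 i g y
      + y i / rad y * pd3 j (pd3 i g) y) := by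
  have e : radDeriv g = fun y => (y 0 / rad y * pd3 0 g y + y 1 / rad y * pd3 1 g y)
      + y 2 / rad y * pd3 2 g y := by
    funext y; simp [radDeriv, Fin.sum_univ_three]
  have hh := fun i => (Sm.unit i).mul (h.pd3 i)
  have h01 : Sm (fun y => y 0 / rad y * pd3 0 g y + y 1 / rad y * pd3 1 g y) :=
    fun y hy => (hh 0 y hy).add (hh 1 y hy)
  rw [e, pd3_add h01 (hh 2) j hy, pd3_add (hh 0) (hh 1) j hy]
  simp only [pd3_mul (Sm.unit _) (h.pd3 _) j hy, pd3_unit _ _ hy, Fin.sum_univ_three]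

theorem rad_rot_comm {g : Sp → ℝ} (h : Sm g) (k : Fin 3) {y : Sp} (hy : y ≠ 0) :
    radDeriv (Rot3 k g) y = Rot3 k (radDeriv g) y := by
  have hp := (rad_pos hy).ne'
  have hs := rad_sq y
  rw [Fin.sum_univ_three] at hs
  have key : ∀ a b j : Fin 3, pd3 j (fun y => y a * pd3 b g y - y b * pd3 a g y) y =
      ((if a = j then 1 else 0) * pd3 b g y + y a * pd3 j (pd3 b g) y) -
      ((if b = j then 1 else 0) * pd3 a g y + y b * pd3 j (pd3 a g) y) := by
    intro a b j
    rw [pd3_sub ((Sm.coord a).mul (h.pd3 b)) ((Sm.coord b).mul (h.pd3 a)) j hy,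
      pd3_mul (Sm.coord _) (h.pd3 _) j hy, pd3_mul (Sm.coord _) (h.pd3 _) j hy, pd3_coord, pd3_coord]
  have c01 := pd3_comm h 0 1 hy
  have c02 := pd3_comm h 0 2 hy
  have c12 := pd3_comm h 1 2 hy
  fin_cases k <;>
  · simp [Rot3, radDeriv, key, Fin.sum_univ_three, pd3_radDeriv h _ hy, c01, c02, c12]
    field_simp
    ring

theorem lagrange (z v : Sp) : dotp z v ^ 2 + ∑ k, crossp z v k ^ 2 = rad z ^ 2 * rad v ^ 2 := by
  rw [rad_sq, rad_sq]
  simp [dotp, crossp, Fin.sum_univ_three]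
  ring

theorem abs_dotp_le (z v : Sp) : |dotp z v| ≤ rad z * rad v := by
  apply abs_le_of_sq_le_sq _ (mul_nonneg (rad_nonneg _) (rad_nonneg _))
  have := lagrange z v
  have h2 : 0 ≤ ∑ k, crossp z v k ^ 2 := by positivity
  rw [mul_pow]; linarith

theorem abs_crossp_le (z v : Sp) (k : Fin 3) : |crossp z v k| ≤ rad z * rad v := by
  apply abs_le_of_sq_le_sq _ (mul_nonneg (rad_nonneg _) (rad_nonneg _))
  have := lagrange z v
  have h2 := Finset.single_le_sum (f := fun k => crossp z v k ^ 2) (fun i _ => sq_nonneg _)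
    (Finset.mem_univ k)
  have h3 := sq_nonneg (dotp z v)
  rw [mul_pow]; linarith

theorem dotp_self (v : Sp) : dotp v v = rad v ^ 2 := by
  rw [rad_sq]; simp [dotp, sq]

theorem hasDerivAt_line (z v : Sp) (s : ℝ) : HasDerivAt (fun s : ℝ => z + s • v) v s := by
  simpa using ((hasDerivAt_id s).smul_const v).const_add z

theorem hasDerivAt_rad_line (z v : Sp) (s : ℝ) (h : z + s • v ≠ 0) :
    HasDerivAt (fun s : ℝ => rad (z + s • v)) (dotp (z + s • v) v / rad (z + s • v)) s := by
  have := (hasFDerivAt_rad h).comp_hasDerivAt s (hasDerivAt_line z v s)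
  rwa [radD_apply] at this

theorem hasDerivAt_dotp_line (z v : Sp) (s : ℝ) :
    HasDerivAt (fun s : ℝ => dotp (z + s • v) v) (dotp v v) s := by
  have : (fun s : ℝ => dotp (z + s • v) v) = fun s => dotp z v + s * dotp v v := by
    funext s; simp [dotp, Fin.sum_univ_three]; ring
  rw [this]
  simpa using ((hasDerivAt_id s).mul_const (dotp v v)).const_add (dotp z v)

theorem crossp_line (z v : Sp) (s : ℝ) (k : Fin 3) : crossp (z + s • v) v k = crossp z v k := by
  fin_cases k <;> simp [crossp] <;> ring

def A0 (z v : Sp) (s : ℝ) : ℝ := dotp (z + s • v) v / rad (z + s • v)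
def A0' (z v : Sp) (s : ℝ) : ℝ :=
  dotp v v / rad (z + s • v) - dotp (z + s • v) v ^ 2 / rad (z + s • v) ^ 3
def A1 (z v : Sp) (k : Fin 3) (s : ℝ) : ℝ := crossp (z + s • v) v k / rad (z + s • v) ^ 2
def A1' (z v : Sp) (k : Fin 3) (s : ℝ) : ℝ :=
  -2 * crossp (z + s • v) v k * dotp (z + s • v) v / rad (z + s • v) ^ 4

theorem hasDerivAt_A0 (z v : Sp) (s : ℝ) (h : z + s • v ≠ 0) :
    HasDerivAt (A0 z v) (A0' z v s) s := by
  have hp := (rad_pos h).ne'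
  refine HasDerivAt.congr_deriv ((hasDerivAt_dotp_line z v s).div (hasDerivAt_rad_line z v s h) hp) ?_
  unfold A0'
  field_simp

theorem hasDerivAt_A1 (z v : Sp) (k : Fin 3) (s : ℝ) (h : z + s • v ≠ 0) :
    HasDerivAt (A1 z v k) (A1' z v k s) s := by
  have hp := (rad_pos h).ne'
  have e : A1 z v k = fun s => crossp z v k / rad (z + s • v) ^ 2 := by
    funext s; rw [A1, crossp_line]
  rw [e]
  refine HasDerivAt.congr_deriv ((hasDerivAt_const s (crossp z v k)).div
    ((hasDerivAt_rad_line z v s h).pow 2) (pow_ne_zero 2 hp)) ?_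
  unfold A1'
  rw [crossp_line]
  simp
  field_simp

theorem hasDerivAt_curve {c : ℝ} (hc : 0 ≤ c) (z v : Sp) (s : ℝ) (h : z + s • v ≠ 0)
    {g : Sp → ℝ} (hg : Sm g) :
    HasDerivAt (fun s : ℝ => g (Psi c (z + s • v)))
      (A0 z v s * radDeriv g (Psi c (z + s • v)) +
        ∑ k, A1 z v k s * Rot3 k g (Psi c (z + s • v))) s := by
  have hne : Psi c (z + s • v) ≠ 0 := by
    apply ne_zero_of_rad_pos
    rw [rad_Psi hc h]
    have := rad_pos h
    positivity
  have h1 := (hasFDerivAt_Psi c h).comp_hasDerivAt s (hasDerivAt_line z v s)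
  have h2 := (hg.diff hne).hasFDerivAt.comp_hasDerivAt s h1
  rw [fderiv_PsiD hc h] at h2
  exact h2

def S1 (w : Sp → ℝ) (y : Sp) : ℝ :=
  |w y| + |radDeriv w y| + |radDeriv (radDeriv w) y| + ∑ k, |Rot3 k w y|
    + ∑ k, |Rot3 k (radDeriv w) y| + ∑ k, ∑ l, |Rot3 k (Rot3 l w) y|

def D1 (c : ℝ) (w : Sp → ℝ) (z v : Sp) (s : ℝ) : ℝ :=
  A0 z v s * radDeriv w (Psi c (z + s • v)) + ∑ k, A1 z v k s * Rot3 k w (Psi c (z + s • v))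

def D2 (c : ℝ) (w : Sp → ℝ) (z v : Sp) (s : ℝ) : ℝ :=
  (A0' z v s * radDeriv w (Psi c (z + s • v)) + A0 z v s * D1 c (radDeriv w) z v s) +
   ∑ k, (A1' z v k s * Rot3 k w (Psi c (z + s • v)) + A1 z v k s * D1 c (Rot3 k w) z v s)

theorem hasDerivAt_D1 {c : ℝ} (hc : 0 ≤ c) (z v : Sp) (s : ℝ) (h : z + s • v ≠ 0)
    {w : Sp → ℝ} (hw : Sm w) : HasDerivAt (D1 c w z v) (D2 c w z v s) s := by
  unfold D1 D2
  exact ((hasDerivAt_A0 z v s h).mul (hasDerivAt_curve hc z v s h hw.radDeriv)).add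
    (HasDerivAt.fun_sum fun k _ => (hasDerivAt_A1 z v k s h).mul
      (hasDerivAt_curve hc z v s h (hw.rot k)))

theorem bounds_A {z v : Sp} {s : ℝ} (h : 1 ≤ rad (z + s • v)) (hv : rad v ≤ 1) :
    |A0 z v s| ≤ 1 ∧ |A0' z v s| ≤ 2 ∧ (∀ k, |A1 z v k s| ≤ 1) ∧ ∀ k, |A1' z v k s| ≤ 2 := by
  have h0 : 0 < rad (z + s • v) := by linarith
  have hd := abs_dotp_le (z + s • v) v
  have hc := abs_crossp_le (z + s • v) v
  have hv0 := rad_nonneg v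
  unfold A0 A0' A1 A1'
  rw [dotp_self]
  set N := rad (z + s • v)
  have hd1 : |dotp (z + s • v) v| ≤ N := hd.trans (by nlinarith)
  have hc1 : ∀ k, |crossp (z + s • v) v k| ≤ N := fun k => (hc k).trans (by nlinarith)
  have hN2 : N ≤ N ^ 2 := by nlinarith
  refine ⟨?_, ?_, ?_, ?_⟩
  · rw [abs_div, abs_of_pos h0, div_le_one h0]; exact hd1
  · have a1 : |rad v ^ 2 / N| ≤ 1 := by
      rw [abs_of_nonneg (by positivity), div_le_one h0]; nlinarith
    have a2 : |dotp (z + s • v) v ^ 2 / N ^ 3| ≤ 1 := by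
      rw [abs_of_nonneg (by positivity), div_le_one (by positivity), ← sq_abs]
      calc _ ≤ N ^ 2 := by gcongr
        _ ≤ N ^ 3 := pow_le_pow_right₀ h (by norm_num)
    exact (abs_sub _ _).trans (by linarith)
  · intro k
    rw [abs_div, abs_of_pos (pow_pos h0 2), div_le_one (by positivity)]
    exact (hc1 k).trans hN2
  · intro k
    rw [abs_div, abs_of_pos (pow_pos h0 4), div_le_iff₀ (by positivity), abs_mul, abs_mul]
    have : |crossp (z + s • v) v k| * |dotp (z + s • v) v| ≤ N * N := by
      gcongr; exact hc1 k
    have h4 : N * N ≤ N ^ 4 := by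
      rw [← sq]; exact pow_le_pow_right₀ h (by norm_num)
    norm_num
    nlinarith

theorem abs_D1_le {c : ℝ} {z v : Sp} {s : ℝ} (h : 1 ≤ rad (z + s • v)) (hv : rad v ≤ 1)
    (w : Sp → ℝ) : |D1 c w z v s| ≤ |radDeriv w (Psi c (z + s • v))| +
      ∑ k, |Rot3 k w (Psi c (z + s • v))| := by
  obtain ⟨b0, -, b1, -⟩ := bounds_A h hv
  unfold D1
  refine (abs_add_le _ _).trans (add_le_add ?_ ((Finset.abs_sum_le_sum_abs _ _).trans
    (Finset.sum_le_sum fun k _ => ?_)))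
  · rw [abs_mul]; exact mul_le_of_le_one_left (abs_nonneg _) b0
  · rw [abs_mul]; exact mul_le_of_le_one_left (abs_nonneg _) (b1 k)

theorem abs_D2_le {c : ℝ} (hc : 0 ≤ c) {z v : Sp} {s : ℝ} (h : 1 ≤ rad (z + s • v))
    (hv : rad v ≤ 1) {w : Sp → ℝ} (hw : Sm w) :
    |D2 c w z v s| ≤ 2 * S1 w (Psi c (z + s • v)) := by
  obtain ⟨b0, b0', b1, b1'⟩ := bounds_A h hv
  have hz : z + s • v ≠ 0 := ne_zero_of_rad_pos (by linarith)
  have hne : Psi c (z + s • v) ≠ 0 := by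
    apply ne_zero_of_rad_pos
    rw [rad_Psi hc hz]
    have := rad_pos hz
    positivity
  have e0 := abs_D1_le (c := c) h hv (radDeriv w)
  have e1 := fun k => abs_D1_le (c := c) h hv (Rot3 k w)
  simp only [rad_rot_comm hw _ hne] at e1
  set y := Psi c (z + s • v)
  have t1 : |A0' z v s * radDeriv w y + A0 z v s * D1 c (radDeriv w) z v s| ≤
      2 * |radDeriv w y| + (|radDeriv (radDeriv w) y| + ∑ k, |Rot3 k (radDeriv w) y|) := by
    refine (abs_add_le _ _).trans (add_le_add ?_ ?_)
    · rw [abs_mul]; gcongr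
    · rw [abs_mul]; exact (mul_le_of_le_one_left (abs_nonneg _) b0).trans e0
  have t2 : |∑ k, (A1' z v k s * Rot3 k w y + A1 z v k s * D1 c (Rot3 k w) z v s)| ≤
      ∑ k, (2 * |Rot3 k w y| + (|Rot3 k (radDeriv w) y| + ∑ l, |Rot3 l (Rot3 k w) y|)) := by
    refine (Finset.abs_sum_le_sum_abs _ _).trans (Finset.sum_le_sum fun k _ => ?_)
    refine (abs_add_le _ _).trans (add_le_add ?_ ?_)
    · rw [abs_mul]; gcongr; exact b1' k
    · rw [abs_mul]; exact (mul_le_of_le_one_left (abs_nonneg _) (b1 k)).trans (e1 k)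
  have t3 := (abs_add_le _ _).trans (add_le_add t1 t2)
  refine t3.trans ?_
  unfold S1
  simp only [Finset.sum_add_distrib, ← Finset.mul_sum]
  rw [Finset.sum_comm (f := fun k l => |Rot3 l (Rot3 k w) y|)]
  have p1 := abs_nonneg (w y)
  have p2 := abs_nonneg (radDeriv (radDeriv w) y)
  have p3 : 0 ≤ ∑ k, ∑ l, |Rot3 k (Rot3 l w) y| := by positivity
  linarith

theorem taylor_bound {c : ℝ} (hc : 0 ≤ c) {z v : Sp}
    (h : ∀ s ∈ Set.Icc (0:ℝ) 1, 1 ≤ rad (z + s • v)) (hv : rad v ≤ 1) {w : Sp → ℝ} (hw : Sm w) :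
    ENNReal.ofReal |w (Psi c z)| ≤ 2 * ENNReal.ofReal (S1 w (Psi c (z + (1:ℝ) • v))) +
      2 * ∫⁻ s in Set.Ioc (0:ℝ) 1, ENNReal.ofReal (s * S1 w (Psi c (z + s • v))) := by
  have hne : ∀ s ∈ Set.Icc (0:ℝ) 1, z + s • v ≠ 0 := fun s hs =>
    ne_zero_of_rad_pos (by linarith [h s hs])
  have hcont : ContinuousOn (D2 c w z v) (Set.Icc 0 1) := by
    have hA : ∀ {f f' : ℝ → ℝ}, (∀ s ∈ Set.Icc (0:ℝ) 1, HasDerivAt f (f' s) s) →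
        ContinuousOn f (Set.Icc 0 1) := fun H s hs => (H s hs).continuousAt.continuousWithinAt
    have c0 := hA fun s hs => hasDerivAt_A0 z v s (hne s hs)
    have c1 := fun k => hA fun s hs => hasDerivAt_A1 z v k s (hne s hs)
    have cc := fun (g : Sp → ℝ) (hg : Sm g) => hA fun s hs => hasDerivAt_curve hc z v s (hne s hs) hg
    have cd := fun (g : Sp → ℝ) (hg : Sm g) => hA fun s hs => hasDerivAt_D1 hc z v s (hne s hs) hg
    have cl : ContinuousOn (fun s : ℝ => z + s • v) (Set.Icc 0 1) := by fun_prop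
    have cr : ContinuousOn (fun s : ℝ => rad (z + s • v)) (Set.Icc 0 1) :=
      continuous_rad.comp_continuousOn cl
    have cdot : ContinuousOn (fun s : ℝ => dotp (z + s • v) v) (Set.Icc 0 1) :=
      hA fun s _ => hasDerivAt_dotp_line z v s
    have c0' : ContinuousOn (A0' z v) (Set.Icc 0 1) := by
      unfold A0'
      refine (continuousOn_const.div cr ?_).sub ((cdot.pow 2).div (cr.pow 3) ?_)
      · exact fun s hs => (rad_pos (hne s hs)).ne'
      · exact fun s hs => pow_ne_zero _ (rad_pos (hne s hs)).ne'
    have c1' : ∀ k, ContinuousOn (A1' z v k) (Set.Icc 0 1) := by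
      intro k
      unfold A1'
      simp only [crossp_line]
      refine (continuousOn_const.mul cdot).div (cr.pow 4) ?_
      exact fun s hs => pow_ne_zero _ (rad_pos (hne s hs)).ne'
    unfold D2
    refine ((c0'.mul (cc _ hw.radDeriv)).add (c0.mul (cd _ hw.radDeriv))).add
      (continuousOn_finsetSum _ fun k _ => ?_)
    exact ((c1' k).mul (cc _ (hw.rot k))).add ((c1 k).mul (cd _ (hw.rot k)))
  have hF : ∀ s ∈ Set.Icc (0:ℝ) 1, HasDerivAt (fun s => w (Psi c (z + s • v)) - s * D1 c w z v s)
      (-(s * D2 c w z v s)) s := by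
    intro s hs
    have h1 := hasDerivAt_curve hc z v s (hne s hs) hw
    have h2 := (hasDerivAt_id s).mul (hasDerivAt_D1 hc z v s (hne s hs) hw)
    refine HasDerivAt.congr_deriv (h1.sub h2) ?_
    simp [D1]
  have hIntegr : IntervalIntegrable (fun s => -(s * D2 c w z v s)) volume 0 1 := by
    apply ContinuousOn.intervalIntegrable
    rw [Set.uIcc_of_le zero_le_one]
    exact (continuousOn_id.mul hcont).neg
  have hftc := intervalIntegral.integral_eq_sub_of_hasDerivAt
    (fun s hs => hF s (by rwa [Set.uIcc_of_le zero_le_one] at hs)) hIntegr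
  simp only [zero_smul, add_zero, zero_mul, sub_zero, one_mul] at hftc
  have heq : w (Psi c z) = (w (Psi c (z + (1:ℝ) • v)) - D1 c w z v 1) -
      ∫ s in (0:ℝ)..1, -(s * D2 c w z v s) := by rw [hftc]; ring
  have hb : |w (Psi c (z + (1:ℝ) • v)) - D1 c w z v 1| ≤ 2 * S1 w (Psi c (z + (1:ℝ) • v)) := by
    have := abs_D1_le (c := c) (h 1 (by simp)) hv w
    refine (abs_sub _ _).trans ?_
    unfold S1
    set y := (Psi c (z + (1:ℝ) • v))
    have p1 := abs_nonneg (w y)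
    have p0 := abs_nonneg (radDeriv w y)
    have p2 := abs_nonneg (radDeriv (radDeriv w) y)
    have p3 : 0 ≤ ∑ k, ∑ l, |Rot3 k (Rot3 l w) y| := by positivity
    have p4 : 0 ≤ ∑ k, |Rot3 k (radDeriv w) y| := by positivity
    have p5 : 0 ≤ ∑ k, |Rot3 k w y| := by positivity
    linarith
  have hi : ENNReal.ofReal |∫ s in (0:ℝ)..1, -(s * D2 c w z v s)| ≤
      2 * ∫⁻ s in Set.Ioc (0:ℝ) 1, ENNReal.ofReal (s * S1 w (Psi c (z + s • v))) := by
    rw [← Real.enorm_eq_ofReal_abs, intervalIntegral.integral_of_le zero_le_one,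
      ← lintegral_const_mul' _ _ (by simp)]
    refine (enorm_integral_le_lintegral_enorm _).trans ?_
    refine setLIntegral_mono' measurableSet_Ioc fun s hs => ?_
    rw [Real.enorm_eq_ofReal_abs, ← ENNReal.ofReal_ofNat, ← ENNReal.ofReal_mul (by norm_num)]
    apply ENNReal.ofReal_le_ofReal
    rw [abs_neg, abs_mul, abs_of_pos hs.1]
    have := abs_D2_le hc (h s ⟨hs.1.le, hs.2⟩) hv hw
    nlinarith [hs.1]
  rw [heq]
  refine (ENNReal.ofReal_le_ofReal (abs_sub _ _)).trans ?_
  rw [ENNReal.ofReal_add (abs_nonneg _) (abs_nonneg _)]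
  refine add_le_add ?_ hi
  rw [← ENNReal.ofReal_ofNat, ← ENNReal.ofReal_mul (by norm_num)]
  exact ENNReal.ofReal_le_ofReal hb

def Bx : Set Sp := Metric.closedBall 0 (1/2)

theorem rad_le_of_mem_Bx {v : Sp} (hv : v ∈ Bx) : rad v ≤ 1 := by
  have h : ∀ i, |v i| ≤ 1/2 := fun i => by
    have := norm_le_pi_norm v i
    have h2 : ‖v‖ ≤ 1/2 := by simpa [Bx] using hv
    exact (Real.norm_eq_abs _ ▸ this).trans h2
  have h2 : ∀ i, v i ^ 2 ≤ 1/4 := fun i => by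
    rw [← sq_abs]; nlinarith [h i, abs_nonneg (v i)]
  unfold rad
  rw [Real.sqrt_le_iff, Fin.sum_univ_three]
  refine ⟨by norm_num, ?_⟩
  linarith [h2 0, h2 1, h2 2]

theorem volume_Bx : volume Bx = 1 := by
  rw [Bx, Real.volume_pi_closedBall _ (by norm_num)]
  norm_num

instance : IsProbabilityMeasure (volume.restrict Bx) := ⟨by simp [volume_Bx]⟩

theorem rad_add_le (z v : Sp) : rad (z + v) ≤ rad z + rad v := by
  have h : rad (z + v) ^ 2 = rad z ^ 2 + 2 * dotp z v + rad v ^ 2 := by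
    simp only [rad_sq, dotp, Fin.sum_univ_three, Pi.add_apply]; ring
  have h2 := le_of_abs_le (abs_dotp_le z v)
  have := rad_nonneg z
  have := rad_nonneg v
  refine (sq_le_sq₀ (rad_nonneg _) (by positivity)).1 ?_
  nlinarith

theorem rad_line {z v : Sp} (hz : rad z = 2) (hv : v ∈ Bx) {s : ℝ} (hs : s ∈ Set.Icc (0:ℝ) 1) :
    1 ≤ rad (z + s • v) ∧ rad (z + s • v) ≤ 3 := by
  have h1 := rad_le_of_mem_Bx hv
  have h2 : rad (s • v) ≤ 1 := by
    rw [rad_smul, abs_of_nonneg hs.1]; nlinarith [rad_nonneg v, hs.1, hs.2]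
  have h3 := rad_add_le z (s • v)
  have h4 := rad_add_le (z + s • v) ((-1 : ℝ) • (s • v))
  rw [rad_smul] at h4
  norm_num at h4
  constructor <;> linarith

theorem Psi_inj {c : ℝ} (hc : 0 ≤ c) {z z' : Sp} (hz : z ≠ 0) (hz' : z' ≠ 0)
    (h : Psi c z = Psi c z') : z = z' := by
  have h1 := congrArg rad h
  rw [rad_Psi hc hz, rad_Psi hc hz'] at h1
  have h2 : rad z = rad z' := by linarith
  unfold Psi at h
  rw [h2] at h
  have hp := rad_pos hz'
  exact smul_right_injective Sp (by positivity : (1 + c / rad z') ≠ 0) h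

def Ig (R : ℝ) (g : Sp → ℝ) : ENNReal :=
  ∫⁻ y in {y : Sp | |rad y - R| ≤ 1}, ENNReal.ofReal (g y ^ 2 / rad y ^ 2)

theorem change_var {c : ℝ} (hc : 0 ≤ c) {z : Sp} (hz : rad z = 2) {s : ℝ}
    (hs : s ∈ Set.Ioc (0:ℝ) 1) (g : Sp → ℝ) :
    ∫⁻ v in Bx, ENNReal.ofReal (s ^ 3 / 9 * g (Psi c (z + s • v)) ^ 2) ≤ Ig (c + 2) g := by
  have hs' : s ∈ Set.Icc (0:ℝ) 1 := ⟨hs.1.le, hs.2⟩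
  have hne : ∀ v ∈ Bx, z + s • v ≠ 0 := fun v hv =>
    ne_zero_of_rad_pos (by linarith [(rad_line hz hv hs').1])
  have hmeas : MeasurableSet Bx := measurableSet_closedBall
  have hd : ∀ v ∈ Bx, HasFDerivWithinAt (fun v => Psi c (z + s • v)) (s • PsiD c (z + s • v)) Bx v := by
    intro v hv
    have h1 : HasFDerivAt (fun v : Sp => z + s • v) (s • ContinuousLinearMap.id ℝ Sp) v :=
      ((hasFDerivAt_id v).const_smul s).const_add z
    refine ((hasFDerivAt_Psi c (hne v hv)).comp v h1).hasFDerivWithinAt.congr_fderiv ?_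
    ext u
    simp
  have hinj : Set.InjOn (fun v => Psi c (z + s • v)) Bx := by
    intro v hv v' hv' h
    have := Psi_inj hc (hne v hv) (hne v' hv') h
    have := add_left_cancel this
    exact smul_right_injective Sp hs.1.ne' this
  have key := lintegral_image_eq_lintegral_abs_det_fderiv_mul volume hmeas hd hinj
    (fun y => ENNReal.ofReal (g y ^ 2 / rad y ^ 2))
  have hsub : (fun v => Psi c (z + s • v)) '' Bx ⊆ {y : Sp | |rad y - (c + 2)| ≤ 1} := by
    rintro _ ⟨v, hv, rfl⟩
    have := rad_line hz hv hs'
    simp only [Set.mem_ofPred_eq]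
    rw [rad_Psi hc (hne v hv), abs_le]
    constructor <;> linarith
  calc _ ≤ _ := ?_
    _ = _ := key.symm
    _ ≤ _ := lintegral_mono_set hsub
  refine setLIntegral_mono' hmeas fun v hv => ?_
  rw [← ENNReal.ofReal_mul (abs_nonneg _)]
  apply ENNReal.ofReal_le_ofReal
  have hN := rad_line hz hv hs'
  rw [det_PsiD c s (hne v hv), rad_Psi hc (hne v hv)]
  generalize g (Psi c (z + s • v)) = q
  generalize rad (z + s • v) = N at hN
  have h0 : 0 < N := by linarith
  have hs0 := hs.1
  rw [abs_of_nonneg (by positivity)]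
  have e : s ^ 3 * (1 + c / N) ^ 2 * (q ^ 2 / (N + c) ^ 2) = s ^ 3 / N ^ 2 * q ^ 2 := by
    field_simp
  rw [e]
  have : N ^ 2 ≤ 9 := by nlinarith
  gcongr

theorem cs_Bx {F : Sp → ℝ} (hF : Measurable F) :
    ∫⁻ v in Bx, ENNReal.ofReal |F v| ≤ (∫⁻ v in Bx, ENNReal.ofReal (F v ^ 2)) ^ ((1:ℝ)/2) := by
  have h := eLpNorm_le_eLpNorm_of_exponent_le (p := 1) (q := 2) (μ := volume.restrict Bx)
    (by norm_num) (f := F) hF.aestronglyMeasurable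
  rw [eLpNorm_one_eq_lintegral_enorm, eLpNorm_eq_lintegral_rpow_enorm_toReal (by norm_num) (by norm_num)] at h
  simp only [Real.enorm_eq_ofReal_abs] at h
  refine h.trans (le_of_eq ?_)
  simp only [ENNReal.toReal_ofNat]
  congr 1
  refine lintegral_congr fun v => ?_
  rw [ENNReal.ofReal_rpow_of_nonneg (abs_nonneg _) (by norm_num)]
  simp

theorem measurable_Psi (c : ℝ) : Measurable (Psi c) := by
  unfold Psi
  have := continuous_rad.measurable
  fun_prop

theorem slice_bound {c : ℝ} (hc : 0 ≤ c) {z : Sp} (hz : rad z = 2) {s : ℝ}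
    (hs : s ∈ Set.Ioc (0:ℝ) 1) {g : Sp → ℝ} (hg : Measurable g) :
    ∫⁻ v in Bx, ENNReal.ofReal |g (Psi c (z + s • v))| ≤
      ENNReal.ofReal (3 * s ^ (-(3/2) : ℝ)) * Ig (c + 2) g ^ ((1:ℝ)/2) := by
  have hs0 := hs.1
  refine (cs_Bx (F := fun v => g (Psi c (z + s • v)))
    (hg.comp ((measurable_Psi c).comp (by fun_prop)))).trans ?_
  have h1 := change_var hc hz hs g
  have h2 : ∫⁻ v in Bx, ENNReal.ofReal (g (Psi c (z + s • v)) ^ 2) =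
      ENNReal.ofReal (9 * s ^ (-3 : ℝ)) *
      ∫⁻ v in Bx, ENNReal.ofReal (s ^ 3 / 9 * g (Psi c (z + s • v)) ^ 2) := by
    rw [← lintegral_const_mul' _ _ ENNReal.ofReal_ne_top]
    refine lintegral_congr fun v => ?_
    rw [← ENNReal.ofReal_mul (by positivity)]
    congr 1
    rw [Real.rpow_neg hs0.le]
    norm_cast
    field_simp
  rw [h2]
  calc _ ≤ (ENNReal.ofReal (9 * s ^ (-3 : ℝ)) * Ig (c + 2) g) ^ ((1:ℝ)/2) := by gcongr
    _ = _ := by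
      rw [ENNReal.mul_rpow_of_nonneg _ _ (by norm_num), ENNReal.ofReal_rpow_of_nonneg (by positivity) (by norm_num)]
      congr 2
      rw [Real.mul_rpow (by norm_num) (by positivity), ← Real.rpow_mul hs0.le]
      congr 1
      · rw [← Real.sqrt_eq_rpow, show (9:ℝ) = 3 ^ 2 by norm_num, Real.sqrt_sq (by norm_num)]
      · norm_num

theorem int_s : ∫⁻ s in Set.Ioc (0:ℝ) 1, ENNReal.ofReal (s * (3 * s ^ (-(3/2) : ℝ))) = 6 := by
  have e : ∫⁻ s in Set.Ioc (0:ℝ) 1, ENNReal.ofReal (s * (3 * s ^ (-(3/2) : ℝ))) =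
      ∫⁻ s in Set.Ioc (0:ℝ) 1, ENNReal.ofReal (3 * s ^ (-(1/2) : ℝ)) := by
    refine setLIntegral_congr_fun measurableSet_Ioc fun s hs => ?_
    congr 1
    rw [show (-(1/2) : ℝ) = 1 + -(3/2) by norm_num, Real.rpow_add hs.1, Real.rpow_one]
    ring
  have hi : IntervalIntegrable (fun s : ℝ => 3 * s ^ (-(1/2) : ℝ)) volume 0 1 :=
    (intervalIntegral.intervalIntegrable_rpow' (by norm_num)).const_mul 3
  rw [e, ← ofReal_integral_eq_lintegral_ofReal, ← intervalIntegral.integral_of_le zero_le_one,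
    intervalIntegral.integral_const_mul, integral_rpow (by norm_num)]
  · norm_num
  · exact (intervalIntegrable_iff_integrableOn_Ioc_of_le zero_le_one).1 hi
  · refine (ae_restrict_iff' measurableSet_Ioc).2 (Filter.Eventually.of_forall fun s hs => ?_)
    have := hs.1
    simp only [Pi.zero_apply]
    positivity

theorem core_bound {c : ℝ} (hc : 0 ≤ c) {z : Sp} (hz : rad z = 2) {g : Sp → ℝ} (hg : Measurable g) :
    (∫⁻ v in Bx, ENNReal.ofReal |g (Psi c (z + (1:ℝ) • v))|) +
    (∫⁻ v in Bx, ∫⁻ s in Set.Ioc (0:ℝ) 1, ENNReal.ofReal (s * |g (Psi c (z + s • v))|)) ≤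
      9 * Ig (c + 2) g ^ ((1:ℝ)/2) := by
  have h1 := slice_bound hc hz (s := 1) (by simp) hg
  have hm : Measurable (fun p : Sp × ℝ => ENNReal.ofReal (p.2 * |g (Psi c (z + p.2 • p.1))|)) := by
    have : Measurable (fun p : Sp × ℝ => g (Psi c (z + p.2 • p.1))) :=
      hg.comp ((measurable_Psi c).comp (by fun_prop))
    have h2 : Measurable (fun p : Sp × ℝ => |g (Psi c (z + p.2 • p.1))|) := this.abs
    exact (measurable_snd.mul h2).ennreal_ofReal
  rw [lintegral_lintegral_swap hm.aemeasurable]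
  have h2 : (∫⁻ s in Set.Ioc (0:ℝ) 1, ∫⁻ v in Bx, ENNReal.ofReal (s * |g (Psi c (z + s • v))|)) ≤
      6 * Ig (c + 2) g ^ ((1:ℝ)/2) := by
    rw [← int_s, ← lintegral_mul_const]
    · refine setLIntegral_mono' measurableSet_Ioc fun s hs => ?_
      simp only [ENNReal.ofReal_mul hs.1.le]
      rw [lintegral_const_mul' _ _ (by simp), mul_assoc]
      gcongr
      exact slice_bound hc hz hs hg
    · fun_prop
  calc _ ≤ 3 * Ig (c + 2) g ^ ((1:ℝ)/2) + 6 * Ig (c + 2) g ^ ((1:ℝ)/2) := by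
        refine add_le_add ?_ h2
        simpa using h1
    _ = _ := by rw [← add_mul]; norm_num

theorem measurable_pd3 (j : Fin 3) (g : Sp → ℝ) : Measurable (pd3 j g) :=
  measurable_fderiv_apply_const ℝ g _

theorem measurable_radDeriv (g : Sp → ℝ) : Measurable (radDeriv g) := by
  unfold radDeriv
  have h1 := fun i => measurable_pd3 i g
  have h2 := continuous_rad.measurable
  exact Finset.measurable_fun_sum _ fun i _ => ((measurable_pi_apply i).div h2).mul (h1 i)

theorem measurable_rot (k : Fin 3) (g : Sp → ℝ) : Measurable (Rot3 k g) := by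
  have h1 := fun i => measurable_pd3 i g
  have h : ∀ a b : Fin 3, Measurable (fun x : Sp => x a * pd3 b g x - x b * pd3 a g x) :=
    fun a b => ((measurable_pi_apply a).mul (h1 b)).sub ((measurable_pi_apply b).mul (h1 a))
  fin_cases k
  · exact h 0 1
  · exact h 0 2
  · exact h 1 2

theorem measurable_radIter {w : Sp → ℝ} (hw : Measurable w) : ∀ j, Measurable (radDerivIter j w)
  | 0 => hw
  | _ + 1 => measurable_radDeriv _

theorem measurable_rotComp {w : Sp → ℝ} (hw : Measurable w) :
    ∀ {m : ℕ} (α : Fin m → Fin 3), Measurable (Rot3Comp α w)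
  | 0, _ => hw
  | _ + 1, _ => measurable_rot _ _

theorem Sm.radIter {w : Sp → ℝ} (hw : Sm w) : ∀ j, Sm (radDerivIter j w)
  | 0 => hw
  | j + 1 => (Sm.radIter hw j).radDeriv

theorem Sm.rotComp {w : Sp → ℝ} (hw : Sm w) : ∀ {m : ℕ} (α : Fin m → Fin 3), Sm (Rot3Comp α w)
  | 0, _ => hw
  | _ + 1, _ => (Sm.rotComp hw _).rot _

theorem sum_expand {M : Type*} [AddCommMonoid M] (Q : (Sp → ℝ) → M) (w : Sp → ℝ) :
    ∑ m ∈ Finset.range 3, ∑ j ∈ Finset.range (3 - m), ∑ α : Fin m → Fin 3,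
      Q (Rot3Comp α (radDerivIter j w)) =
    Q w + Q (radDeriv w) + Q (radDeriv (radDeriv w)) + ∑ k, Q (Rot3 k w)
      + ∑ k, Q (Rot3 k (radDeriv w)) + ∑ k, ∑ l, Q (Rot3 k (Rot3 l w)) := by
  have h0 : ∀ g, ∑ α : Fin 0 → Fin 3, Q (Rot3Comp α g) = Q g := by
    intro g; simp [Rot3Comp]
  have h1 : ∀ g, ∑ α : Fin 1 → Fin 3, Q (Rot3Comp α g) = ∑ k, Q (Rot3 k g) := by
    intro g
    refine Fintype.sum_equiv (Equiv.funUnique (Fin 1) (Fin 3)) _ _ fun α => ?_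
    rfl
  have h2 : ∀ g, ∑ α : Fin 2 → Fin 3, Q (Rot3Comp α g) = ∑ k, ∑ l, Q (Rot3 k (Rot3 l g)) := by
    intro g
    rw [← Fintype.sum_prod_type']
    refine Fintype.sum_equiv (finTwoArrowEquiv (Fin 3)) _ _ fun α => ?_
    rfl
  simp only [Finset.sum_range_succ, Finset.sum_range_zero, zero_add, Nat.sub_zero, Nat.reduceSub,
    h0, h1, h2, radDerivIter]
  abel

theorem assemble {c : ℝ} (hc : 0 ≤ c) {z : Sp} (hz : rad z = 2) {w : Sp → ℝ} (hw : Sm w)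
    {ι : Type*} (T : Finset ι) (G : ι → Sp → ℝ) (hG : ∀ p, Measurable (G p))
    (hS : ∀ y, S1 w y = ∑ p ∈ T, |G p y|) :
    ENNReal.ofReal |w (Psi c z)| ≤ 18 * ∑ p ∈ T, Ig (c + 2) (G p) ^ ((1:ℝ)/2) := by
  have hmeas : MeasurableSet Bx := measurableSet_closedBall
  have hc1 : ∫⁻ _ in Bx, ENNReal.ofReal |w (Psi c z)| = ENNReal.ofReal |w (Psi c z)| := by simp [volume_Bx]
  have hcomp : ∀ p, Measurable (fun q : Sp × ℝ => G p (Psi c (z + q.2 • q.1))) := fun p =>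
    (hG p).comp ((measurable_Psi c).comp (by fun_prop))
  have hA : ∀ p, Measurable (fun v : Sp => ENNReal.ofReal |G p (Psi c (z + (1:ℝ) • v))|) := fun p =>
    (((hcomp p).comp (measurable_id.prodMk measurable_const)).abs).ennreal_ofReal
  have hB : ∀ p, Measurable (fun q : Sp × ℝ => ENNReal.ofReal (q.2 * |G p (Psi c (z + q.2 • q.1))|)) :=
    fun p => (measurable_snd.mul (hcomp p).abs).ennreal_ofReal
  have hB1 : ∀ p, Measurable (fun v : Sp => ∫⁻ s in Set.Ioc (0:ℝ) 1,
      ENNReal.ofReal (s * |G p (Psi c (z + s • v))|)) := fun p => (hB p).lintegral_prod_right'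
  have hB2 : ∀ p (v : Sp), Measurable (fun s : ℝ =>
      ENNReal.ofReal (s * |G p (Psi c (z + s • v))|)) := fun p v =>
    (hB p).comp (measurable_const.prodMk measurable_id)
  calc ENNReal.ofReal |w (Psi c z)| = ∫⁻ _ in Bx, ENNReal.ofReal |w (Psi c z)| := hc1.symm
    _ ≤ ∫⁻ v in Bx, ∑ p ∈ T, 2 * (ENNReal.ofReal |G p (Psi c (z + (1:ℝ) • v))| +
          ∫⁻ s in Set.Ioc (0:ℝ) 1, ENNReal.ofReal (s * |G p (Psi c (z + s • v))|)) := by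
        refine setLIntegral_mono' hmeas fun v hv => ?_
        refine (taylor_bound hc (fun s hs => (rad_line hz hv hs).1) (rad_le_of_mem_Bx hv) hw).trans ?_
        rw [← Finset.mul_sum, Finset.sum_add_distrib, ← mul_add]
        gcongr 2 * (?_ + ?_)
        · rw [hS, ENNReal.ofReal_sum_of_nonneg fun _ _ => abs_nonneg _]
        · rw [← lintegral_finsetSum _ fun p _ => hB2 p v]
          refine setLIntegral_mono' measurableSet_Ioc fun s hs => ?_
          rw [hS, Finset.mul_sum, ENNReal.ofReal_sum_of_nonneg]
          exact fun _ _ => mul_nonneg hs.1.le (abs_nonneg _)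
    _ = ∑ p ∈ T, 2 * ((∫⁻ v in Bx, ENNReal.ofReal |G p (Psi c (z + (1:ℝ) • v))|) +
          ∫⁻ v in Bx, ∫⁻ s in Set.Ioc (0:ℝ) 1, ENNReal.ofReal (s * |G p (Psi c (z + s • v))|)) := by
        have hAB : ∀ p, Measurable (fun v : Sp => 2 * (ENNReal.ofReal |G p (Psi c (z + (1:ℝ) • v))| +
            ∫⁻ s in Set.Ioc (0:ℝ) 1, ENNReal.ofReal (s * |G p (Psi c (z + s • v))|))) :=
          fun p => ((hA p).add (hB1 p)).const_mul 2
        rw [lintegral_finsetSum _ fun p _ => hAB p]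
        refine Finset.sum_congr rfl fun p _ => ?_
        rw [lintegral_const_mul' _ _ (by simp), lintegral_add_left (hA p)]
    _ ≤ ∑ p ∈ T, 2 * (9 * Ig (c + 2) (G p) ^ ((1:ℝ)/2)) := by
        gcongr with p _
        exact core_bound hc hz (hG p)
    _ = _ := by
        rw [Finset.mul_sum]
        refine Finset.sum_congr rfl fun p _ => ?_
        rw [← mul_assoc]; norm_num

theorem isCompact_shell (R : ℝ) : IsCompact {y : Sp | |rad y - R| ≤ 1} := by
  refine Metric.isCompact_of_isClosed_isBounded ?_ ?_
  · exact isClosed_le ((continuous_rad.sub continuous_const).abs) continuous_const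
  · refine (Metric.isBounded_closedBall (x := (0 : Sp)) (r := R + 1)).subset fun y hy => ?_
    have h : rad y ≤ R + 1 := by
      have := le_of_abs_le (show |rad y - R| ≤ 1 from hy); linarith
    rw [mem_closedBall_zero_iff, pi_norm_le_iff_of_nonneg ((rad_nonneg y).trans h)]
    intro i
    refine le_trans ?_ h
    rw [Real.norm_eq_abs, rad]
    apply Real.abs_le_sqrt
    exact Finset.single_le_sum (f := fun i => y i ^ 2) (fun i _ => sq_nonneg _) (Finset.mem_univ i)

theorem Ig_eq {R : ℝ} (hR : 2 ≤ R) {g : Sp → ℝ} (hg : Sm g) :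
    Ig R g = ENNReal.ofReal (∫ y in {y : Sp | |rad y - R| ≤ 1}, g y ^ 2 / rad y ^ 2) := by
  rw [Ig, ofReal_integral_eq_lintegral_ofReal]
  · apply ContinuousOn.integrableOn_compact (isCompact_shell R)
    intro y hy
    have h0 : 0 < rad y := by
      have := (abs_le.1 (show |rad y - R| ≤ 1 from hy)).1; linarith
    have hy0 := ne_zero_of_rad_pos h0
    exact (((hg y hy0).continuousAt.pow 2).div (continuous_rad.continuousAt.pow 2)
      (pow_ne_zero 2 h0.ne')).continuousWithinAt
  · exact Filter.Eventually.of_forall fun y => by positivity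

/-- the Sobolev estimate on `ℝ₊×S²` from the proof of Lemma 3.5.  For
`w ∈ C₀^∞(ℝ³)` and `|x| ≥ 2`,
`|w(x)| ≤ C Σ_{|α|+j≤2} (∫_{||y|-|x||≤1} |Ω^α∂_r^j w(y)|² |y|⁻² dy)^{1/2}`. -/
theorem stmt_19 :
    ∃ C : ℝ, 0 < C ∧
      ∀ (w : Sp → ℝ), ContDiff ℝ (⊤ : ℕ∞) w → HasCompactSupport w →
        ∀ x : Sp, 2 ≤ rad x →
          |w x| ≤ C * ∑ m ∈ Finset.range 3, ∑ j ∈ Finset.range (3 - m),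
            ∑ α : Fin m → Fin 3,
              (∫ y in {y : Sp | |rad y - rad x| ≤ 1},
                (Rot3Comp α (radDerivIter j w) y) ^ 2 / rad y ^ 2) ^ ((1:ℝ)/2) := by
  refine ⟨18, by norm_num, fun w hw _ x hx => ?_⟩
  have hsm : Sm w := fun y _ => hw.contDiffAt
  have hmw : Measurable w := hw.continuous.measurable
  have hR : 0 < rad x := by linarith
  have hz : rad ((2 / rad x) • x) = 2 := by
    rw [rad_smul, abs_of_pos (by positivity)]; field_simp
  have hPsi : Psi (rad x - 2) ((2 / rad x) • x) = x := by
    rw [Psi, hz, smul_smul]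
    have : (1 + (rad x - 2) / 2) * (2 / rad x) = 1 := by field_simp; ring
    rw [this, one_smul]
  have key := assemble (c := rad x - 2) (by linarith) hz hsm
    ((Finset.range 3).sigma fun m => (Finset.range (3 - m)).sigma fun _ =>
      (Finset.univ : Finset (Fin m → Fin 3)))
    (fun p => Rot3Comp p.2.2 (radDerivIter p.2.1 w))
    (fun p => measurable_rotComp (measurable_radIter hmw _) _)
    (fun y => by
      simp only [Finset.sum_sigma]
      exact (sum_expand (fun g => |g y|) w).symm)
  simp only [Finset.sum_sigma] at key
  rw [hPsi, sub_add_cancel] at key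
  simp only [Ig_eq hx ((hsm.radIter _).rotComp _)] at key
  have hnn : ∀ g : Sp → ℝ, 0 ≤ ∫ y in {y : Sp | |rad y - rad x| ≤ 1}, g y ^ 2 / rad y ^ 2 :=
    fun g => integral_nonneg fun y => by positivity
  have hnn2 : ∀ g : Sp → ℝ,
      0 ≤ (∫ y in {y : Sp | |rad y - rad x| ≤ 1}, g y ^ 2 / rad y ^ 2) ^ ((1:ℝ)/2) :=
    fun g => Real.rpow_nonneg (hnn g) _
  have e : ∀ g : Sp → ℝ, (ENNReal.ofReal (∫ y in {y : Sp | |rad y - rad x| ≤ 1},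
      g y ^ 2 / rad y ^ 2)) ^ ((1:ℝ)/2) = ENNReal.ofReal
      ((∫ y in {y : Sp | |rad y - rad x| ≤ 1}, g y ^ 2 / rad y ^ 2) ^ ((1:ℝ)/2)) :=
    fun g => ENNReal.ofReal_rpow_of_nonneg (hnn g) (by norm_num)
  simp only [e] at key
  have hs1 : ∀ m j, 0 ≤ ∑ α : Fin m → Fin 3, (∫ y in {y : Sp | |rad y - rad x| ≤ 1},
      Rot3Comp α (radDerivIter j w) y ^ 2 / rad y ^ 2) ^ ((1:ℝ)/2) :=
    fun m j => Finset.sum_nonneg fun α _ => hnn2 _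
  have hs2 : ∀ m, 0 ≤ ∑ j ∈ Finset.range (3 - m), ∑ α : Fin m → Fin 3,
      (∫ y in {y : Sp | |rad y - rad x| ≤ 1},
      Rot3Comp α (radDerivIter j w) y ^ 2 / rad y ^ 2) ^ ((1:ℝ)/2) :=
    fun m => Finset.sum_nonneg fun j _ => hs1 m j
  rw [← ENNReal.ofReal_le_ofReal_iff (mul_nonneg (by norm_num) (Finset.sum_nonneg fun m _ => hs2 m)),
    ENNReal.ofReal_mul (by norm_num), ENNReal.ofReal_sum_of_nonneg fun m _ => hs2 m]
  simp only [ENNReal.ofReal_sum_of_nonneg fun j _ => hs1 _ j,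
    ENNReal.ofReal_sum_of_nonneg fun α _ => hnn2 _, ENNReal.ofReal_ofNat]
  exact key
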